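/- arXiv:2402.18724 — 11 statements merged into one kernel-verified Lean document; each statement's English description precedes it below -/
import Mathlib

section
/- Let c > 0. If m : [0, ∞) → ℝ is differentiable with m(0) = 0 and satisfies (1 + exp(m(t))) · m'(t) = c for all t ≥ 0, then for all t ≥ 0 one has log(c t + 1) − 2·log(c t + 1)/(c t + 1) ≤ m(t) ≤ log(c t + 1). -/
/-!
The quantity `m t + exp (m t) - c t` has derivative `(1 + exp (m t)) * m' t - c = 0`, so with
`u = c t + 1` the flow satisfies `m + exp m = u`, where `u ≥ 1` forces `m ≥ 0`. Then
`exp m = u - m ≤ u` gives `m ≤ log u`. For the lower bound,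
`log u - m = log (u / (u - m)) ≤ u / (u - m) - 1 = m / (u - m)`, and `m ≤ log u ≤ u / 2` bounds
this by `2 log u / u`.
-/

/-- The gradient flow conserves `m t + exp (m t) - c t`. -/
lemma margin_add_exp_margin (c : ℝ) (m m' : ℝ → ℝ) (hm0 : m 0 = 0)
    (hderiv : ∀ t ∈ Set.Ici (0 : ℝ), HasDerivWithinAt m (m' t) (Set.Ici 0) t)
    (heq : ∀ t ∈ Set.Ici (0 : ℝ), (1 + Real.exp (m t)) * m' t = c)
    (t : ℝ) (ht : 0 ≤ t) : m t + Real.exp (m t) = c * t + 1 := by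
  have hd : ∀ x ∈ Set.Ici (0 : ℝ),
      HasDerivWithinAt (fun s => m s + Real.exp (m s) - c * s) 0 (Set.Ici 0) x := by
    intro x hx
    have h := ((hderiv x hx).add (hderiv x hx).exp).sub
      ((hasDerivWithinAt_id x (Set.Ici 0)).const_mul c)
    refine h.congr_deriv ?_
    linear_combination heq x hx
  have h := constant_of_has_deriv_right_zero (a := 0) (b := t)
    (fun x hx => (hd x hx.1).continuousWithinAt.mono Set.Icc_subset_Ici_self)
    (fun x hx => (hd x hx.1).mono (Set.Ici_subset_Ici.2 hx.1)) t ⟨ht, le_rfl⟩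
  simp only [hm0, Real.exp_zero] at h
  linarith

lemma log_le_half {u : ℝ} (hu : 0 < u) : Real.log u ≤ u / 2 := by
  have h := Real.log_le_sub_one_of_pos (half_pos hu)
  rw [Real.log_div hu.ne' two_ne_zero] at h
  linarith [Real.log_two_lt_d9]

/-- Gradient flow for the margin of a binary classification problem with orthogonal
embeddings, initialized at zero: the margin satisfies
`log (c t + 1) - 2 log (c t + 1) / (c t + 1) ≤ m t ≤ log (c t + 1)` for all `t ≥ 0`. -/
theorem stmt_4 (c : ℝ) (hc : 0 < c) (m m' : ℝ → ℝ)
    (hm0 : m 0 = 0)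
    (hderiv : ∀ t ∈ Set.Ici (0 : ℝ), HasDerivWithinAt m (m' t) (Set.Ici 0) t)
    (heq : ∀ t ∈ Set.Ici (0 : ℝ), (1 + Real.exp (m t)) * m' t = c) :
    ∀ t ∈ Set.Ici (0 : ℝ),
      Real.log (c * t + 1) - 2 * Real.log (c * t + 1) / (c * t + 1) ≤ m t ∧
      m t ≤ Real.log (c * t + 1) := by
  intro t ht
  have key := margin_add_exp_margin c m m' hm0 hderiv heq t ht
  have hu1 : 1 ≤ c * t + 1 := by linarith [mul_nonneg hc.le (Set.mem_Ici.1 ht)]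
  generalize c * t + 1 = u at key hu1 ⊢
  generalize m t = x at key ⊢
  have hu : 0 < u := by linarith
  have hx : 0 ≤ x := by
    by_contra! h
    linarith [Real.exp_le_one_iff.2 h.le]
  have hxL : x ≤ Real.log u := (Real.le_log_iff_exp_le hu).2 (by linarith)
  refine ⟨?_, hxL⟩
  have hL := log_le_half hu
  have hux : 0 < u - x := by linarith
  have hxe : Real.log (u - x) = x := by
    rw [← key, add_sub_cancel_left, Real.log_exp]
  have h1 := Real.log_le_sub_one_of_pos (div_pos hu hux)
  rw [Real.log_div hu.ne' hux.ne', hxe] at h1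
  have h2 : u / (u - x) - 1 = x / (u - x) := by
    field_simp
    ring
  have h3 : x / (u - x) ≤ Real.log u / (u / 2) := by
    gcongr
    · linarith
    · linarith
  have h4 : Real.log u / (u / 2) = 2 * Real.log u / u := by
    field_simp
  linarith
end

section
/- Let c > 0 and η > 0. If (m_t)_{t∈ℕ} is a real sequence with m₀ = 0 satisfying the gradient-descent recursion (1 + exp(m_t)) · (m_{t+1} − m_t) = η c for all t ∈ ℕ, then for all t ∈ ℕ one has m_t ≥ 0 and exp(m_t) ≥ η c t / 2 + 1; in particular m_t ≥ log(η c t / 2 + 1), so the margin grows at least logarithmically in t. -/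
/-!
Write `E = exp (m t)` and `d = m (t+1) - m t`. The recursion `(1 + E) * d = η * c` forces `d > 0`,
so `m` stays nonnegative and `E ≥ 1`. Convexity of `exp` gives `exp (m (t+1)) ≥ E * (1 + d)`, and
`E * d ≥ (1 + E) * d / 2 = η * c / 2`, so `exp (m t)` increases by at least `η * c / 2` per step.
-/

/-- Gradient descent for the margin of a binary classification problem with orthogonal
embeddings: under the recursion `(1 + exp (m t)) * (m (t+1) - m t) = η * c` with `m 0 = 0`,
the margin satisfies `m t ≥ 0`, `exp (m t) ≥ η c t / 2 + 1` and `m t ≥ log (η c t / 2 + 1)`. -/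
theorem stmt_5 (c η : ℝ) (hc : 0 < c) (hη : 0 < η) (m : ℕ → ℝ)
    (hm0 : m 0 = 0)
    (hrec : ∀ t : ℕ, (1 + Real.exp (m t)) * (m (t + 1) - m t) = η * c) :
    ∀ t : ℕ, 0 ≤ m t ∧ η * c * t / 2 + 1 ≤ Real.exp (m t) ∧
      Real.log (η * c * t / 2 + 1) ≤ m t := by
  have hηc : 0 < η * c := mul_pos hη hc
  have key : ∀ t : ℕ, 0 ≤ m t ∧ η * c * t / 2 + 1 ≤ Real.exp (m t) := by
    intro t
    induction t with
    | zero => simp [hm0]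
    | succ t ih =>
      obtain ⟨hnonneg, hexp⟩ := ih
      have hE : 1 ≤ Real.exp (m t) := Real.one_le_exp hnonneg
      have hr := hrec t
      have hd : 0 < m (t + 1) - m t :=
        pos_of_mul_pos_right (hr ▸ hηc) (by positivity)
      refine ⟨by linarith, ?_⟩
      have hstep : Real.exp (m t) * (1 + (m (t + 1) - m t)) ≤ Real.exp (m (t + 1)) := by
        calc Real.exp (m t) * (1 + (m (t + 1) - m t))
            ≤ Real.exp (m t) * Real.exp (m (t + 1) - m t) := by
              gcongr
              linarith [Real.add_one_le_exp (m (t + 1) - m t)]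
          _ = Real.exp (m (t + 1)) := by rw [← Real.exp_add, add_sub_cancel]
      have hgain : 0 ≤ (Real.exp (m t) - 1) * (m (t + 1) - m t) :=
        mul_nonneg (by linarith) hd.le
      push_cast
      linarith
  intro t
  obtain ⟨hnonneg, hexp⟩ := key t
  exact ⟨hnonneg, hexp, (Real.log_le_iff_le_exp (by positivity)).mpr hexp⟩
end

section
/- Let M ≥ 2 and c > 0, and let w : [0, ∞) → ℝ^M be differentiable and satisfy, with A(t) = Σ_{k=1}^M exp(w_k(t)), the gradient-flow equations A(t) · w₁'(t) = c (A(t) − exp(w₁(t))) and A(t) · w_i'(t) = −c exp(w_i(t)) for all i ∈ {2, …, M} and all t ≥ 0. Then for every i, j ∈ {2, …, M} the quantity exp(−w_i(t)) − exp(−w_j(t)) is constant in t, and the sum Σ_{k=1}^M w_k(t) is constant in t. -/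
/-!
Both quantities have zero derivative along the flow. Since `exp (-w_i) * exp (w_i) = 1`, for
`i ≠ 0` the derivative of `exp (-w_i)` is `c / A` with `A = ∑ k, exp (w_k) > 0`, which does not
depend on `i`. Adding all the flow equations gives `A * ∑ k, w_k' = 0`, hence `∑ k, w_k' = 0`.
A function with zero one-sided derivative on `[0, ∞)` is constant.
-/

theorem const_of_hasDerivWithinAt_Ici_zero {f : ℝ → ℝ}
    (hf : ∀ t ∈ Set.Ici (0 : ℝ), HasDerivWithinAt f 0 (Set.Ici 0) t) :
    ∀ t ∈ Set.Ici (0 : ℝ), ∀ s ∈ Set.Ici (0 : ℝ), f t = f s := by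
  have key : ∀ t ∈ Set.Ici (0 : ℝ), f t = f 0 := fun t ht =>
    constant_of_has_deriv_right_zero
      (fun x hx => (hf x hx.1).continuousWithinAt.mono Set.Icc_subset_Ici_self)
      (fun x hx => (hf x hx.1).mono (Set.Ici_subset_Ici.2 hx.1)) t ⟨ht, le_rfl⟩
  intro t ht s hs
  rw [key t ht, key s hs]

/-- Invariants of the multi-class gradient flow with orthonormal output embeddings and true
class `0`: for `i, j ≠ 0`, the quantity `exp (-w_i) - exp (-w_j)` is constant in time, and
the sum `∑ k, w_k` is constant in time. -/
theorem stmt_7 (M : ℕ) (hM : 2 ≤ M) [NeZero M] (c : ℝ) (hc : 0 < c)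
    (w w' : ℝ → Fin M → ℝ)
    (hderiv : ∀ i : Fin M, ∀ t ∈ Set.Ici (0 : ℝ),
      HasDerivWithinAt (fun s => w s i) (w' t i) (Set.Ici 0) t)
    (h₁ : ∀ t ∈ Set.Ici (0 : ℝ),
      (∑ k, Real.exp (w t k)) * w' t 0 =
        c * ((∑ k, Real.exp (w t k)) - Real.exp (w t 0)))
    (hi : ∀ i : Fin M, i ≠ 0 → ∀ t ∈ Set.Ici (0 : ℝ),
      (∑ k, Real.exp (w t k)) * w' t i = -c * Real.exp (w t i)) :
    (∀ i : Fin M, i ≠ 0 → ∀ j : Fin M, j ≠ 0 →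
      ∀ t ∈ Set.Ici (0 : ℝ), ∀ s ∈ Set.Ici (0 : ℝ),
        Real.exp (-w t i) - Real.exp (-w t j) = Real.exp (-w s i) - Real.exp (-w s j)) ∧
    (∀ t ∈ Set.Ici (0 : ℝ), ∀ s ∈ Set.Ici (0 : ℝ), ∑ k, w t k = ∑ k, w s k) := by
  have hA : ∀ t, 0 < ∑ k, Real.exp (w t k) := fun t =>
    Finset.sum_pos (fun k _ => Real.exp_pos _) ⟨0, Finset.mem_univ _⟩
  constructor
  · have hd : ∀ i : Fin M, i ≠ 0 → ∀ t ∈ Set.Ici (0 : ℝ),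
        HasDerivWithinAt (fun s => Real.exp (-w s i)) (c / ∑ k, Real.exp (w t k))
          (Set.Ici 0) t := by
      intro i hi0 t ht
      refine (hderiv i t ht).neg.exp.congr_deriv ?_
      have h := hi i hi0 t ht
      have he : Real.exp (-w t i) * Real.exp (w t i) = 1 := by
        rw [← Real.exp_add, neg_add_cancel, Real.exp_zero]
      rw [eq_div_iff (hA t).ne']
      simp only [Pi.neg_apply]
      linear_combination (-Real.exp (-w t i)) * h + c * he
    intro i hi0 j hj0
    refine const_of_hasDerivWithinAt_Ici_zero
      (f := fun s => Real.exp (-w s i) - Real.exp (-w s j)) fun t ht => ?_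
    exact ((hd i hi0 t ht).sub (hd j hj0 t ht)).congr_deriv (sub_self _)
  · refine const_of_hasDerivWithinAt_Ici_zero (f := fun s => ∑ k, w s k) fun t ht => ?_
    refine (HasDerivWithinAt.fun_sum fun k _ => hderiv k t ht).congr_deriv ?_
    -- Uniform form of the flow: the true class only contributes the extra term `c * A`.
    have h : ∀ k, (∑ l, Real.exp (w t l)) * w' t k =
        (if k = 0 then c * ∑ l, Real.exp (w t l) else 0) - c * Real.exp (w t k) := by
      intro k
      split_ifs with hk
      · subst hk
        rw [h₁ t ht, mul_sub]
      · rw [hi k hk t ht]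
        ring
    refine (mul_eq_zero.1 ?_).resolve_left (hA t).ne'
    rw [Finset.mul_sum, Finset.sum_congr rfl fun k _ => h k, Finset.sum_sub_distrib,
      Finset.sum_ite_eq' Finset.univ (0 : Fin M), ← Finset.mul_sum]
    simp
end

section
/- Let M ≥ 2 and c > 0, and let w : [0, ∞) → ℝ^M be differentiable and satisfy, with A(t) = Σ_{k=1}^M exp(w_k(t)), the gradient-flow equations A(t) · w₁'(t) = c (A(t) − exp(w₁(t))) and A(t) · w_i'(t) = −c exp(w_i(t)) for all i ∈ {2, …, M} and all t ≥ 0. Then, for any initial condition w(0), as t → ∞ one has w₁(t)/log(t) → (M−1)/M and, for every i ∈ {2, …, M}, w_i(t)/log(t) → −1/M. -/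
/-!
Write `A = ∑ k, exp (w k)` and fix a class `j ≠ 0`. Two kinds of conserved quantities drive the
proof: the sum `∑ k, w k`, and `exp (-w i) - exp (-w j)` for `i, j ≠ 0` (each `exp (-w i)` has
derivative `c / A`). Since every `w i` with `i ≠ 0` is nonincreasing, the second family forces all
differences `w i - w j` to stay bounded (`bounded_diff`). Hence `w 0 + (M - 1) w j`, which equals
the conserved sum minus `∑ (w i - w j)` over `i ≠ 0`, is bounded, and `A * exp ((M - 1) w j)` lies
between two positive constants. As `exp (-M w j)` has derivative `M c / (A * exp ((M - 1) w j))`, it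
grows linearly, so `-M w j / log t → 1` (`tendsto_log_div_log`). The limit for `w 0` follows from
the conserved sum.
-/

lemma le_of_deriv_nonneg_Ici {f f' : ℝ → ℝ}
    (hf : ∀ t ∈ Set.Ici (0 : ℝ), HasDerivWithinAt f (f' t) (Set.Ici 0) t)
    (h0 : ∀ t ∈ Set.Ici (0 : ℝ), 0 ≤ f' t) {t : ℝ} (ht : 0 ≤ t) : f 0 ≤ f t := by
  have hmono : MonotoneOn f (Set.Ici 0) := by
    refine monotoneOn_of_hasDerivWithinAt_nonneg (f' := f') (convex_Ici 0)
      (fun x hx => (hf x hx).continuousWithinAt) ?_ ?_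
    · intro x hx
      exact (hf x (interior_subset hx)).mono interior_subset
    · intro x hx
      exact h0 x (interior_subset hx)
  exact hmono (Set.mem_Ici.2 le_rfl) (Set.mem_Ici.2 ht) ht

lemma eq_of_deriv_zero_Ici {f f' : ℝ → ℝ}
    (hf : ∀ t ∈ Set.Ici (0 : ℝ), HasDerivWithinAt f (f' t) (Set.Ici 0) t)
    (h0 : ∀ t ∈ Set.Ici (0 : ℝ), f' t = 0) {t : ℝ} (ht : 0 ≤ t) : f t = f 0 := by
  apply le_antisymm
  · have := le_of_deriv_nonneg_Ici (f := fun s => -f s) (f' := fun s => -f' s)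
      (fun s hs => (hf s hs).neg) (fun s hs => by simp [h0 s hs]) ht
    simpa using this
  · exact le_of_deriv_nonneg_Ici hf (fun s hs => (h0 s hs).ge) ht

/-- A function whose slope stays between two positive constants grows linearly, so its logarithm
is asymptotic to `log t`. -/
lemma tendsto_log_div_log {g g' : ℝ → ℝ} {m L : ℝ} (hm : 0 < m) (hg0 : 0 < g 0)
    (hg : ∀ t ∈ Set.Ici (0 : ℝ), HasDerivWithinAt g (g' t) (Set.Ici 0) t)
    (hlo : ∀ t ∈ Set.Ici (0 : ℝ), m ≤ g' t) (hup : ∀ t ∈ Set.Ici (0 : ℝ), g' t ≤ L) :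
    Filter.Tendsto (fun t => Real.log (g t) / Real.log t) Filter.atTop (nhds 1) := by
  have hL : 0 < L := hm.trans_le ((hlo 0 Set.self_mem_Ici).trans (hup 0 Set.self_mem_Ici))
  have lower : ∀ t, 0 ≤ t → g 0 + m * t ≤ g t := by
    intro t ht
    have := le_of_deriv_nonneg_Ici (f := fun s => g s - m * s) (f' := fun s => g' s - m * 1)
      (fun s hs => (hg s hs).sub ((hasDerivWithinAt_id s _).const_mul m))
      (fun s hs => by linarith [hlo s hs]) ht
    simp only [mul_zero, sub_zero] at this
    linarith
  have upper : ∀ t, 0 ≤ t → g t ≤ g 0 + L * t := by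
    intro t ht
    have := le_of_deriv_nonneg_Ici (f := fun s => L * s - g s) (f' := fun s => L * 1 - g' s)
      (fun s hs => ((hasDerivWithinAt_id s _).const_mul L).sub (hg s hs))
      (fun s hs => by linarith [hup s hs]) ht
    simp only [mul_zero, zero_sub] at this
    linarith
  have hlim : ∀ a : ℝ,
      Filter.Tendsto (fun t => a / Real.log t + 1) Filter.atTop (nhds 1) := by
    intro a
    simpa using (Real.tendsto_log_atTop.const_div_atTop a).add_const 1
  refine tendsto_of_tendsto_of_tendsto_of_le_of_le' (hlim (Real.log m))
    (hlim (Real.log (g 0 + L))) ?_ ?_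
  all_goals
    filter_upwards [Filter.eventually_gt_atTop (1 : ℝ)] with t ht
    have ht0 : 0 < t := by linarith
    have hlog : 0 < Real.log t := Real.log_pos ht
    have hmt : 0 < m * t := by positivity
    have h1 := lower t ht0.le
    have h2 := upper t ht0.le
    rw [div_add_one hlog.ne']
    refine div_le_div_of_nonneg_right ?_ hlog.le
    rw [← Real.log_mul (by positivity) ht0.ne']
    refine Real.log_le_log (by linarith) ?_
    nlinarith

/-- If `u` and `v` both solve `A x' = -c exp x`, then `exp (-u) - exp (-v)` is conserved and `v`
is nonincreasing, so `exp (v - u) = 1 + (exp (-u) - exp (-v)) * exp v` stays bounded. -/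
lemma bounded_diff {A u v u' v' : ℝ → ℝ} {c : ℝ} (hc : 0 < c) (hA : ∀ t, 0 < A t)
    (hu : ∀ t ∈ Set.Ici (0 : ℝ), HasDerivWithinAt u (u' t) (Set.Ici 0) t)
    (hv : ∀ t ∈ Set.Ici (0 : ℝ), HasDerivWithinAt v (v' t) (Set.Ici 0) t)
    (hu' : ∀ t ∈ Set.Ici (0 : ℝ), u' t = -(c * Real.exp (u t) / A t))
    (hv' : ∀ t ∈ Set.Ici (0 : ℝ), v' t = -(c * Real.exp (v t) / A t)) :
    ∃ B, ∀ t, 0 ≤ t → v t - u t ≤ B := by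
  have hcons : ∀ t, 0 ≤ t →
      Real.exp (-u t) - Real.exp (-v t) = Real.exp (-u 0) - Real.exp (-v 0) := by
    intro t ht
    refine eq_of_deriv_zero_Ici (f := fun s => Real.exp (-u s) - Real.exp (-v s))
      (fun s hs => (hu s hs).neg.exp.sub (hv s hs).neg.exp) ?_ ht
    intro s hs
    have := (hA s).ne'
    rw [hu' s hs, hv' s hs, Pi.neg_apply, Pi.neg_apply, Real.exp_neg, Real.exp_neg]
    field_simp
    ring
  have hdecr : ∀ t, 0 ≤ t → v t ≤ v 0 := by
    intro t ht
    have := le_of_deriv_nonneg_Ici (f := fun s => -v s) (fun s hs => (hv s hs).neg)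
      (fun s hs => by
        have := hA s
        rw [hv' s hs, neg_neg]
        positivity) ht
    simpa using this
  refine ⟨|Real.exp (-u 0) - Real.exp (-v 0)| * Real.exp (v 0), fun t ht => ?_⟩
  have h1 : Real.exp (v t - u t)
      = 1 + (Real.exp (-u 0) - Real.exp (-v 0)) * Real.exp (v t) := by
    rw [← hcons t ht, sub_mul, ← Real.exp_add, ← Real.exp_add]
    simp [sub_eq_neg_add]
  have h2 : (Real.exp (-u 0) - Real.exp (-v 0)) * Real.exp (v t)
      ≤ |Real.exp (-u 0) - Real.exp (-v 0)| * Real.exp (v 0) :=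
    mul_le_mul (le_abs_self _) (Real.exp_le_exp.2 (hdecr t ht)) (Real.exp_pos _).le
      (abs_nonneg _)
  linarith [Real.add_one_le_exp (v t - u t)]

/-- Asymptotics of the multi-class gradient flow with orthonormal output embeddings and
true class `0`: for any initial condition, `w_0(t) / log t → (M-1)/M` and
`w_i(t) / log t → -1/M` for every `i ≠ 0`. -/
theorem stmt_9 (M : ℕ) (hM : 2 ≤ M) [NeZero M] (c : ℝ) (hc : 0 < c)
    (w w' : ℝ → Fin M → ℝ)
    (hderiv : ∀ i : Fin M, ∀ t ∈ Set.Ici (0 : ℝ),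
      HasDerivWithinAt (fun s => w s i) (w' t i) (Set.Ici 0) t)
    (h₁ : ∀ t ∈ Set.Ici (0 : ℝ),
      (∑ k, Real.exp (w t k)) * w' t 0 =
        c * ((∑ k, Real.exp (w t k)) - Real.exp (w t 0)))
    (hi : ∀ i : Fin M, i ≠ 0 → ∀ t ∈ Set.Ici (0 : ℝ),
      (∑ k, Real.exp (w t k)) * w' t i = -c * Real.exp (w t i)) :
    Filter.Tendsto (fun t => w t 0 / Real.log t) Filter.atTop
        (nhds (((M : ℝ) - 1) / M)) ∧
      ∀ i : Fin M, i ≠ 0 →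
        Filter.Tendsto (fun t => w t i / Real.log t) Filter.atTop
          (nhds (-1 / (M : ℝ))) := by
  have hM0 : (0 : ℝ) < M := by exact_mod_cast (by omega : 0 < M)
  have hA : ∀ t, 0 < ∑ k, Real.exp (w t k) := fun t =>
    Finset.sum_pos (fun k _ => Real.exp_pos _) ⟨0, Finset.mem_univ _⟩
  have hsplit : ∀ f : Fin M → ℝ, ∑ k, f k = f 0 + ∑ k ∈ Finset.univ.erase 0, f k := fun f =>
    (Finset.add_sum_erase _ f (Finset.mem_univ 0)).symm
  have hcard : ((Finset.univ.erase (0 : Fin M)).card : ℝ) = M - 1 := by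
    rw [Finset.card_erase_of_mem (Finset.mem_univ _), Finset.card_univ, Fintype.card_fin,
      Nat.cast_sub (by omega), Nat.cast_one]
  have hi' : ∀ i : Fin M, i ≠ 0 → ∀ t ∈ Set.Ici (0 : ℝ),
      w' t i = -(c * Real.exp (w t i) / ∑ k, Real.exp (w t k)) := by
    intro i h0 t ht
    rw [← neg_div, eq_div_iff (hA t).ne']
    linarith [hi i h0 t ht]
  have hsum : ∀ t, 0 ≤ t → ∑ k, w t k = ∑ k, w 0 k := by
    intro t ht
    refine eq_of_deriv_zero_Ici (f := fun s => ∑ k, w s k) (f' := fun s => ∑ k, w' s k)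
      (fun s hs => HasDerivWithinAt.fun_sum fun k _ => hderiv k s hs) ?_ ht
    intro s hs
    refine (mul_eq_zero.1 ?_).resolve_left (hA s).ne'
    rw [hsplit (w' s), mul_add, h₁ s hs, Finset.mul_sum,
      Finset.sum_congr rfl fun k hk => hi k (Finset.ne_of_mem_erase hk) s hs,
      ← Finset.mul_sum, hsplit fun k => Real.exp (w s k)]
    ring
  have hdecr : ∀ i : Fin M, i ≠ 0 → ∀ t, 0 ≤ t → w t i ≤ w 0 i := by
    intro i h0 t ht
    have := le_of_deriv_nonneg_Ici (f := fun s => -w s i)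
      (fun s hs => (hderiv i s hs).neg)
      (fun s hs => by
        have := hA s
        rw [hi' i h0 s hs, neg_neg]
        positivity) ht
    simpa using this
  have hbd : ∀ i j : Fin M, ∃ B, i ≠ 0 → j ≠ 0 → ∀ t, 0 ≤ t → w t i - w t j ≤ B := by
    intro i j
    by_cases h : i ≠ 0 ∧ j ≠ 0
    · obtain ⟨B, hB⟩ := bounded_diff hc hA (hderiv j) (hderiv i) (hi' j h.2) (hi' i h.1)
      exact ⟨B, fun _ _ => hB⟩
    · exact ⟨0, fun h1 h2 => absurd ⟨h1, h2⟩ h⟩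
  choose B hB using hbd
  have main : ∀ i : Fin M, i ≠ 0 →
      Filter.Tendsto (fun t => w t i / Real.log t) Filter.atTop (nhds (-1 / (M : ℝ))) := by
    intro j hj
    set S := ∑ k, w 0 k with hS
    have hw0 : ∀ t, 0 ≤ t → w t 0 + (M - 1) * w t j
        = S - ∑ k ∈ Finset.univ.erase 0, (w t k - w t j) := by
      intro t ht
      rw [← hsum t ht, hsplit (w t), Finset.sum_sub_distrib, Finset.sum_const, nsmul_eq_mul,
        hcard]
      ring
    -- `Q` equals `A * exp ((M - 1) w j)`; the slope of `exp (-M w j)` is `M * c / Q`.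
    let Q : ℝ → ℝ := fun t => ∑ k, Real.exp (w t k + (M - 1) * w t j)
    have hQ : ∀ t, Q t = (∑ k, Real.exp (w t k)) * Real.exp ((M - 1) * w t j) := by
      intro t
      simp only [Q, Real.exp_add, Finset.sum_mul]
    have hQpos : ∀ t, 0 < Q t := fun t => by
      rw [hQ]; exact mul_pos (hA t) (Real.exp_pos _)
    have hQlo : ∀ t, 0 ≤ t →
        Real.exp (S - ∑ k ∈ Finset.univ.erase 0, B k j) ≤ Q t := by
      intro t ht
      refine le_trans ?_ (Finset.single_le_sum
        (f := fun k => Real.exp (w t k + (M - 1) * w t j))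
        (fun k _ => (Real.exp_pos _).le) (Finset.mem_univ 0))
      refine Real.exp_le_exp.2 ?_
      rw [hw0 t ht]
      refine sub_le_sub_left (Finset.sum_le_sum fun k hk => ?_) _
      exact hB k j (Finset.ne_of_mem_erase hk) hj t ht
    have hQup : ∃ K, ∀ t, 0 ≤ t → Q t ≤ K := by
      refine ⟨Real.exp (S + ∑ k ∈ Finset.univ.erase 0, B j k)
        + ∑ k ∈ Finset.univ.erase 0, Real.exp (w 0 k + (M - 1) * w 0 j), fun t ht => ?_⟩
      simp only [Q]
      rw [hsplit]
      refine add_le_add (Real.exp_le_exp.2 ?_)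
        (Finset.sum_le_sum fun k hk => Real.exp_le_exp.2 ?_)
      · rw [hw0 t ht, sub_eq_add_neg, ← Finset.sum_neg_distrib]
        refine add_le_add_right (Finset.sum_le_sum fun k hk => ?_) _
        linarith [hB j k hj (Finset.ne_of_mem_erase hk) t ht]
      · have hM1 : (0 : ℝ) ≤ M - 1 := hcard ▸ Nat.cast_nonneg _
        exact add_le_add (hdecr k (Finset.ne_of_mem_erase hk) t ht)
          (mul_le_mul_of_nonneg_left (hdecr j hj t ht) hM1)
    obtain ⟨K, hK⟩ := hQup
    have hKpos : 0 < K := (hQpos 0).trans_le (hK 0 le_rfl)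
    have hg : ∀ t ∈ Set.Ici (0 : ℝ), HasDerivWithinAt (fun s => Real.exp (-M * w s j))
        (M * c / Q t) (Set.Ici 0) t := by
      intro t ht
      convert ((hderiv j t ht).const_mul (-M : ℝ)).exp using 1
      have hexp : Real.exp (-(M * w t j)) * Real.exp (w t j) * Real.exp ((M - 1) * w t j) = 1 := by
        rw [← Real.exp_add, ← Real.exp_add, Real.exp_eq_one_iff]
        ring
      have := (hA t).ne'
      have := (Real.exp_pos ((M - 1) * w t j)).ne'
      rw [hi' j hj t ht, hQ]
      field_simp
      linear_combination -hexp
    have hlim := tendsto_log_div_log (g := fun s => Real.exp (-M * w s j)) (m := M * c / K)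
      (by positivity) (Real.exp_pos _) hg
      (fun t ht => div_le_div_of_nonneg_left (by positivity) (hQpos t) (hK t ht))
      (fun t ht => div_le_div_of_nonneg_left (by positivity) (Real.exp_pos _) (hQlo t ht))
    have := hlim.const_mul (-1 / (M : ℝ))
    rw [mul_one] at this
    refine this.congr fun t => ?_
    rw [Real.log_exp]
    field_simp
  refine ⟨?_, main⟩
  have hlim : Filter.Tendsto (fun t => (∑ k, w 0 k) / Real.log t
      - ∑ k ∈ Finset.univ.erase (0 : Fin M), w t k / Real.log t) Filter.atTop
      (nhds (0 - ∑ k ∈ Finset.univ.erase (0 : Fin M), -1 / (M : ℝ))) :=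
    (Real.tendsto_log_atTop.const_div_atTop _).sub
      (tendsto_finsetSum _ fun k hk => main k (Finset.ne_of_mem_erase hk))
  have hval : 0 - ∑ k ∈ Finset.univ.erase (0 : Fin M), -1 / (M : ℝ) = ((M : ℝ) - 1) / M := by
    rw [Finset.sum_const, nsmul_eq_mul, hcard]
    ring
  rw [hval] at hlim
  refine hlim.congr' ?_
  filter_upwards [Filter.eventually_ge_atTop (0 : ℝ)] with t ht
  rw [← Finset.sum_div, ← sub_div, ← hsum t ht, hsplit (w t), add_sub_cancel_right]
end

section
/- Let p₁ ≥ p₂ > 0, set γ̄ = (1/2)·log(p₁/p₂) and C(γ₂) = (p₁ − p₂)·exp(−γ₂)/(2·√(p₁ p₂)). Then for all real γ₁, γ₂: p₁/(1 + exp(γ₂ + γ₁)) − p₂/(1 + exp(γ₂ − γ₁)) ≤ 0 if and only if sinh(γ₁ − γ̄) ≥ C(γ₂). -/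
/-! With `γ̄ = (1/2) log (p₁/p₂)` one has `exp γ̄ = √p₁ / √p₂`, so that
`sinh (γ₁ - γ̄) = (p₂ exp γ₁ - p₁ exp (-γ₁)) / (2 √(p₁ p₂))`. Clearing positive denominators,
both sides of the equivalence become `p₁ - p₂ ≤ exp γ₂ * (p₂ exp γ₁ - p₁ exp (-γ₁))`. -/

theorem sinh_sub_half_log_div {p₁ p₂ : ℝ} (hp₁ : 0 < p₁) (hp₂ : 0 < p₂) (x : ℝ) :
    Real.sinh (x - (1 / 2) * Real.log (p₁ / p₂)) =
      (p₂ * Real.exp x - p₁ * Real.exp (-x)) / (2 * Real.sqrt (p₁ * p₂)) := by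
  have ha : 0 < Real.sqrt p₁ := Real.sqrt_pos.2 hp₁
  have hb : 0 < Real.sqrt p₂ := Real.sqrt_pos.2 hp₂
  have hexp : Real.exp ((1 / 2) * Real.log (p₁ / p₂)) = Real.sqrt p₁ / Real.sqrt p₂ := by
    rw [one_div_mul_eq_div, ← Real.log_sqrt (div_pos hp₁ hp₂).le,
      Real.exp_log (Real.sqrt_pos.2 (div_pos hp₁ hp₂)), Real.sqrt_div hp₁.le]
  rw [Real.sinh_eq, neg_sub, Real.exp_sub, Real.exp_sub, hexp, Real.exp_neg,
    Real.sqrt_mul hp₁.le]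
  have hx := Real.exp_pos x
  field_simp
  rw [Real.sq_sqrt hp₁.le, Real.sq_sqrt hp₂.le]

/-- In the two-token interacting system with frequencies `p₁ ≥ p₂ > 0`, setting
`γ̄ = (1/2) log (p₁/p₂)` and `C γ₂ = (p₁ - p₂) exp (-γ₂) / (2 √(p₁ p₂))`, the update
direction of `γ₁` is nonpositive iff `sinh (γ₁ - γ̄) ≥ C γ₂`. -/
theorem stmt_11 (p₁ p₂ : ℝ) (hp : p₂ ≤ p₁) (hp₂ : 0 < p₂) (γ₁ γ₂ : ℝ) :
    p₁ / (1 + Real.exp (γ₂ + γ₁)) - p₂ / (1 + Real.exp (γ₂ - γ₁)) ≤ 0 ↔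
      (p₁ - p₂) * Real.exp (-γ₂) / (2 * Real.sqrt (p₁ * p₂)) ≤
        Real.sinh (γ₁ - (1 / 2) * Real.log (p₁ / p₂)) := by
  have hp₁ : 0 < p₁ := hp₂.trans_le hp
  have hs : 0 < 2 * Real.sqrt (p₁ * p₂) :=
    mul_pos two_pos (Real.sqrt_pos.2 (mul_pos hp₁ hp₂))
  have h₂ := Real.exp_pos γ₂
  rw [sinh_sub_half_log_div hp₁ hp₂, div_le_div_iff_of_pos_right hs, sub_nonpos,
    div_le_div_iff₀ (by positivity) (by positivity), Real.exp_neg γ₂, ← div_eq_mul_inv,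
    div_le_iff₀ h₂, sub_eq_add_neg γ₂ γ₁, Real.exp_add, Real.exp_add]
  constructor <;> intro h <;> linarith
end

section
/- Consider the two-particle gradient-flow system with γ₁(0) = γ₂(0) = 0. Then for all t ≥ 0, exp(γ₂(t)) + γ₂(t) ≥ c(1−α) p₂ t + 1; in particular γ₂(t) ≥ log(c(1−α) p₂ t + 1) − 2·log(c(1−α) p₂ t + 1)/(c(1−α) p₂ t + 1), so the max-margin direction grows at least logarithmically in t. -/
/-!
The quantity `exp γ₂ + γ₂` has derivative `γ₂' (1 + exp γ₂)`. Whatever the sign of `γ₁`, one of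
the two denominators `1 + exp (γ₂ ± γ₁)` is at most `1 + exp γ₂`, and both numerators are at
least `p₂`; so this derivative is at least `c (1 - α) p₂` (`div_le_sum`), which integrates to the
first bound.
The second bound inverts the first: `x ↦ exp x + x` is increasing, and at
`log s - 2 log s / s` it is at most `s` (`log_sub_le_of_le_exp_add`).
-/

/-- At least one of `γ₂ + γ₁`, `γ₂ - γ₁` does not exceed `γ₂`, so a single term of the sum
already dominates the left-hand side. -/
lemma div_le_sum {p₁ p₂ : ℝ} (hp₂ : 0 < p₂) (hp : p₂ ≤ p₁) (x y : ℝ) :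
    p₂ / (1 + Real.exp y) ≤
      p₁ / (1 + Real.exp (y + x)) + p₂ / (1 + Real.exp (y - x)) := by
  have hp₁ : 0 < p₁ := hp₂.trans_le hp
  rcases le_total x 0 with hx | hx
  · have h1 : p₂ / (1 + Real.exp y) ≤ p₁ / (1 + Real.exp (y + x)) := by
      gcongr
      linarith
    have h2 : 0 ≤ p₂ / (1 + Real.exp (y - x)) := by positivity
    linarith
  · have h1 : p₂ / (1 + Real.exp y) ≤ p₂ / (1 + Real.exp (y - x)) := by
      gcongr
      linarith
    have h2 : 0 ≤ p₁ / (1 + Real.exp (y + x)) := by positivity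
    linarith

lemma two_mul_log_le {s : ℝ} (hs : 0 < s) : 2 * Real.log s ≤ s + 2 := by
  -- The tangent line of `log` at `2`, rather than at `1`, has the required slope `1 / 2`.
  have h := Real.log_le_sub_one_of_pos (half_pos hs)
  rw [Real.log_div hs.ne' two_ne_zero] at h
  have h2 := Real.log_two_lt_d9
  linarith

/-- Inversion of `s ≤ exp g + g`. With `u = log s`, the estimate `exp (-y) ≤ 1 / (1 + y)` at
`y = 2 u / s` reduces the claim to `2 u ≤ s + 2`. -/
lemma log_sub_le_of_le_exp_add {s g : ℝ} (hs : 1 ≤ s) (h : s ≤ Real.exp g + g) :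
    Real.log s - 2 * Real.log s / s ≤ g := by
  have hs0 : 0 < s := by linarith
  have hu : 0 ≤ Real.log s := Real.log_nonneg hs
  have hus := two_mul_log_le hs0
  by_contra! hlt
  have hexp := Real.exp_lt_exp.2 hlt
  rw [Real.exp_sub, Real.exp_log hs0] at hexp
  set u := Real.log s
  have hE : s / Real.exp (2 * u / s) ≤ s / (2 * u / s + 1) := by
    gcongr
    exact Real.add_one_le_exp _
  have key : s / (2 * u / s + 1) + (u - 2 * u / s) ≤ s := by
    have hid : s - (s / (2 * u / s + 1) + (u - 2 * u / s)) =
        u * (s * (s + 2 - 2 * u) + 4 * u) / (s * (2 * u + s)) := by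
      have : 2 * u + s ≠ 0 := by positivity
      field_simp
      ring
    have : 0 ≤ u * (s * (s + 2 - 2 * u) + 4 * u) / (s * (2 * u + s)) := by
      have : 0 ≤ s + 2 - 2 * u := by linarith
      positivity
    linarith
  linarith


/-- Two-particle gradient flow initialized at zero: the max-margin direction `γ₂` satisfies
`exp (γ₂ t) + γ₂ t ≥ c (1-α) p₂ t + 1`, hence grows at least logarithmically. -/
theorem stmt_12 (c α p₁ p₂ : ℝ) (hc : 0 < c) (hα : -1 < α) (hα' : α < 1)
    (hp : p₂ ≤ p₁) (hp₂ : 0 < p₂) (hps : p₁ + p₂ = 1)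
    (γ₁ γ₂ γ₁' γ₂' : ℝ → ℝ) (h₁0 : γ₁ 0 = 0) (h₂0 : γ₂ 0 = 0)
    (hd₁ : ∀ t ∈ Set.Ici (0 : ℝ), HasDerivWithinAt γ₁ (γ₁' t) (Set.Ici 0) t)
    (hd₂ : ∀ t ∈ Set.Ici (0 : ℝ), HasDerivWithinAt γ₂ (γ₂' t) (Set.Ici 0) t)
    (he₁ : ∀ t ∈ Set.Ici (0 : ℝ), γ₁' t = c * (1 + α) *
      (p₁ / (1 + Real.exp (γ₂ t + γ₁ t)) - p₂ / (1 + Real.exp (γ₂ t - γ₁ t))))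
    (he₂ : ∀ t ∈ Set.Ici (0 : ℝ), γ₂' t = c * (1 - α) *
      (p₁ / (1 + Real.exp (γ₂ t + γ₁ t)) + p₂ / (1 + Real.exp (γ₂ t - γ₁ t)))) :
    ∀ t ∈ Set.Ici (0 : ℝ),
      c * (1 - α) * p₂ * t + 1 ≤ Real.exp (γ₂ t) + γ₂ t ∧
      Real.log (c * (1 - α) * p₂ * t + 1) -
          2 * Real.log (c * (1 - α) * p₂ * t + 1) / (c * (1 - α) * p₂ * t + 1) ≤ γ₂ t := by
  have hK : 0 < c * (1 - α) := mul_pos hc (by linarith)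
  have hF : ∀ t ∈ Set.Ici (0 : ℝ), HasDerivWithinAt
      (fun t => Real.exp (γ₂ t) + γ₂ t - c * (1 - α) * p₂ * t)
      (Real.exp (γ₂ t) * γ₂' t + γ₂' t - c * (1 - α) * p₂) (Set.Ici 0) t := fun t ht => by
    have h := ((hd₂ t ht).exp.add (hd₂ t ht)).sub
      ((hasDerivWithinAt_id t (Set.Ici 0)).const_mul (c * (1 - α) * p₂))
    rw [mul_one] at h
    exact h
  have hmono : MonotoneOn (fun t => Real.exp (γ₂ t) + γ₂ t - c * (1 - α) * p₂ * t)
      (Set.Ici 0) := by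
    refine monotoneOn_of_hasDerivWithinAt_nonneg (convex_Ici 0)
      (fun t ht => (hF t ht).continuousWithinAt)
      (fun t ht => (hF t (interior_subset ht)).mono interior_subset) fun t ht => ?_
    rw [he₂ t (interior_subset ht)]
    have h := div_le_sum hp₂ hp (γ₁ t) (γ₂ t)
    rw [div_le_iff₀ (by positivity)] at h
    have h' := mul_le_mul_of_nonneg_left h hK.le
    linarith
  intro t ht
  have h1 : c * (1 - α) * p₂ * t + 1 ≤ Real.exp (γ₂ t) + γ₂ t := by
    have h := hmono (Set.mem_Ici.2 le_rfl) ht ht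
    simp only [h₂0, Real.exp_zero] at h
    linarith
  have hs : 0 ≤ c * (1 - α) * p₂ * t := mul_nonneg (mul_pos hK hp₂).le ht
  exact ⟨h1, log_sub_le_of_le_exp_add (by linarith) h1⟩
end

section
/- Consider the two-particle gradient-flow system with γ₁(0) = γ₂(0) = 0. Then for all t ≥ 0, one has 0 ≤ γ₁(t) ≤ (1/2)·log(p₁/p₂) + arsinh((p₁ − p₂)/(2·√(p₁ p₂))); that is, the component of the weights orthogonal to the max-margin direction remains bounded for all time. -/
/-!
The upper bound in the theorem is `log (p₁ / p₂)` in disguise, since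
`(p₁ - p₂) / (2 √(p₁ p₂)) = sinh ((1/2) log (p₁ / p₂))` (`bound_eq_log`).

The equation for `γ₂` forces `γ₂ ≥ 0`. Clearing denominators, `γ₁'` has the sign of
`p₁ (1 + exp (γ₂ - γ₁)) - p₂ (1 + exp (γ₂ + γ₁))`. This is nonnegative when `γ₁ < 0`, because
`p₁ ≥ p₂`. When `γ₁ > log (p₁ / p₂)`, so that `p₁ < p₂ exp γ₁`, it is at most
`(p₁ - p₂) (1 - exp γ₂) ≤ 0`. Hence `γ₁` can leave `[0, log (p₁ / p₂)]` on neither side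
(`le_of_deriv_nonpos_above`).
-/

/-- Barrier principle: a function starting at or below `b` whose derivative is nonpositive
whenever its value exceeds `b` stays at or below `b`. -/
lemma le_of_deriv_nonpos_above {f f' : ℝ → ℝ} {b : ℝ} (h0 : f 0 ≤ b)
    (hd : ∀ t ∈ Set.Ici (0 : ℝ), HasDerivWithinAt f (f' t) (Set.Ici 0) t)
    (hneg : ∀ t ∈ Set.Ici (0 : ℝ), b < f t → f' t ≤ 0) :
    ∀ t ∈ Set.Ici (0 : ℝ), f t ≤ b := by
  intro T hT
  have hT0 : (0 : ℝ) ≤ T := hT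
  -- Compare with the strictly increasing barrier `b + ε (1 + t)`, then let `ε` tend to `0`.
  have key : ∀ ε > 0, f T ≤ b + ε * (1 + T) := by
    intro ε hε
    refine image_le_of_deriv_right_lt_deriv_boundary' (f := f) (f' := f') (a := 0) (b := T)
      (B := fun t => b + ε * (1 + t)) (B' := fun _ => ε) ?_ ?_ ?_ ?_ ?_ ?_ ⟨hT0, le_rfl⟩
    · exact fun x hx => (hd x hx.1).continuousWithinAt.mono Set.Icc_subset_Ici_self
    · exact fun x hx => (hd x hx.1).mono (Set.Ici_subset_Ici.2 hx.1)
    · simp only [add_zero, mul_one]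
      linarith
    · fun_prop
    · intro x _
      simpa using ((((hasDerivAt_id x).const_add 1).const_mul ε).const_add b).hasDerivWithinAt
    · intro x hx hfx
      have hx0 : 0 ≤ x := hx.1
      have : 0 < ε * (1 + x) := by positivity
      exact lt_of_le_of_lt (hneg x hx0 (by rw [hfx]; linarith)) hε
  refine le_of_forall_pos_le_add fun δ hδ => ?_
  have h := key (δ / (1 + T)) (by positivity)
  rwa [div_mul_cancel₀ δ (by positivity)] at h

lemma bound_eq_log {p₁ p₂ : ℝ} (h₁ : 0 < p₁) (h₂ : 0 < p₂) :
    (1 / 2) * Real.log (p₁ / p₂) + Real.arsinh ((p₁ - p₂) / (2 * Real.sqrt (p₁ * p₂)))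
      = Real.log (p₁ / p₂) := by
  obtain ⟨s, hs, rfl⟩ : ∃ s : ℝ, 0 < s ∧ p₁ = s ^ 2 :=
    ⟨√p₁, Real.sqrt_pos.2 h₁, (Real.sq_sqrt h₁.le).symm⟩
  obtain ⟨r, hr, rfl⟩ : ∃ r : ℝ, 0 < r ∧ p₂ = r ^ 2 :=
    ⟨√p₂, Real.sqrt_pos.2 h₂, (Real.sq_sqrt h₂.le).symm⟩
  have hsinh : (s ^ 2 - r ^ 2) / (2 * √(s ^ 2 * r ^ 2)) = Real.sinh (Real.log (s / r)) := by
    rw [Real.sinh_log (by positivity), ← mul_pow, Real.sqrt_sq (by positivity)]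
    field_simp
  rw [hsinh, Real.arsinh_sinh, ← div_pow, Real.log_pow]
  push_cast
  ring


/-- Two-particle gradient flow initialized at zero: the component `γ₁` orthogonal to the
max-margin direction remains bounded:
`0 ≤ γ₁ t ≤ (1/2) log (p₁/p₂) + arsinh ((p₁ - p₂) / (2 √(p₁ p₂)))` for all `t ≥ 0`. -/
theorem stmt_13 (c α p₁ p₂ : ℝ) (hc : 0 < c) (hα : -1 < α) (hα' : α < 1)
    (hp : p₂ ≤ p₁) (hp₂ : 0 < p₂) (hps : p₁ + p₂ = 1)
    (γ₁ γ₂ γ₁' γ₂' : ℝ → ℝ) (h₁0 : γ₁ 0 = 0) (h₂0 : γ₂ 0 = 0)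
    (hd₁ : ∀ t ∈ Set.Ici (0 : ℝ), HasDerivWithinAt γ₁ (γ₁' t) (Set.Ici 0) t)
    (hd₂ : ∀ t ∈ Set.Ici (0 : ℝ), HasDerivWithinAt γ₂ (γ₂' t) (Set.Ici 0) t)
    (he₁ : ∀ t ∈ Set.Ici (0 : ℝ), γ₁' t = c * (1 + α) *
      (p₁ / (1 + Real.exp (γ₂ t + γ₁ t)) - p₂ / (1 + Real.exp (γ₂ t - γ₁ t))))
    (he₂ : ∀ t ∈ Set.Ici (0 : ℝ), γ₂' t = c * (1 - α) *
      (p₁ / (1 + Real.exp (γ₂ t + γ₁ t)) + p₂ / (1 + Real.exp (γ₂ t - γ₁ t)))) :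
    ∀ t ∈ Set.Ici (0 : ℝ),
      0 ≤ γ₁ t ∧
      γ₁ t ≤ (1 / 2) * Real.log (p₁ / p₂) +
        Real.arsinh ((p₁ - p₂) / (2 * Real.sqrt (p₁ * p₂))) := by
  have hp₁ : 0 < p₁ := hp₂.trans_le hp
  have hγ₂ : ∀ t ∈ Set.Ici (0 : ℝ), 0 ≤ γ₂ t := by
    intro t ht
    refine neg_nonpos.1 (le_of_deriv_nonpos_above (f := fun t => -γ₂ t) (f' := fun t => -γ₂' t)
      (by simp [h₂0]) (fun t ht => (hd₂ t ht).fun_neg) (fun t ht _ => ?_) t ht)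
    have : 0 < 1 - α := by linarith
    rw [neg_nonpos, he₂ t ht]
    positivity
  have hcα : 0 ≤ c * (1 + α) := mul_nonneg hc.le (by linarith)
  intro t ht
  constructor
  · refine neg_nonpos.1 (le_of_deriv_nonpos_above (f := fun t => -γ₁ t) (f' := fun t => -γ₁' t)
      (by simp [h₁0]) (fun t ht => (hd₁ t ht).fun_neg) (fun t ht hlt => ?_) t ht)
    have hlt' : γ₁ t < 0 := neg_pos.1 hlt
    rw [neg_nonpos, he₁ t ht]
    refine mul_nonneg hcα (sub_nonneg.2 ?_)
    gcongr
    linarith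
  · rw [bound_eq_log hp₁ hp₂]
    refine le_of_deriv_nonpos_above ?_ hd₁ (fun t ht hlt => ?_) t ht
    · rw [h₁0]
      exact Real.log_nonneg ((one_le_div hp₂).2 hp)
    rw [he₁ t ht]
    refine mul_nonpos_of_nonneg_of_nonpos hcα (sub_nonpos.2 ?_)
    have hE : p₁ < p₂ * Real.exp (γ₁ t) := by
      have := (Real.log_lt_iff_lt_exp (by positivity)).1 hlt
      rwa [div_lt_iff₀' hp₂] at this
    have hF : 1 ≤ Real.exp (γ₂ t) := Real.one_le_exp (hγ₂ t ht)
    rw [div_le_div_iff₀ (by positivity) (by positivity), Real.exp_add, Real.exp_sub]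
    have hEpos := Real.exp_pos (γ₁ t)
    generalize Real.exp (γ₁ t) = E at *
    generalize Real.exp (γ₂ t) = F at *
    have h₁ : p₁ * (F / E) ≤ p₂ * F := by
      rw [mul_div_assoc', div_le_iff₀ hEpos]
      nlinarith
    have h₂ : F * p₁ ≤ F * (p₂ * E) := by gcongr
    have h₃ : 0 ≤ (p₁ - p₂) * (F - 1) := mul_nonneg (sub_nonneg.2 hp) (sub_nonneg.2 hF)
    linarith
end

section
/- Consider the two-particle gradient-flow system with γ₁(0) = γ₂(0) = 0. Then γ₁(t) converges to (1/2)·log(p₁/p₂) as t → ∞. -/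
/-!
The second component `γ₂` is increasing and unbounded: if it stayed below `M`, one of the two
sigmoid terms would always be at least `min p₁ p₂ / (1 + exp M)`, so `γ₂'` would be bounded away
from `0` (`tendsto_atTop_of_flow`). Hence `γ₂` may serve as a clock. Writing
`A = p₁ / (1 + exp (γ₂ + γ₁))`, `B = p₂ / (1 + exp (γ₂ - γ₁))` and `L = (1/2) log (p₁/p₂)`, as soon as `γ₂` is large, `γ₁ ≥ L + ε` forces
`A ≤ exp (-ε) B` (`sigmoid_ratio`), so `γ₁` decreases at a rate at least a fixed multiple of
`γ₂'`. Therefore `γ₁` must eventually enter the region `γ₁ ≤ L + ε`, and it can never leave it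
again (`eventually_le_of_drift`). The lower bound is the same statement for `-γ₁`, because the
system is invariant under `γ₁ ↦ -γ₁`, `p₁ ↔ p₂`.
-/

/-- A function `x` that above level `K` decreases at least `κ` times as fast as a clock `y → ∞`
increases is eventually at most `K`. -/
lemma eventually_le_of_drift {x y x' y' : ℝ → ℝ} {T K κ : ℝ} (hκ : 0 < κ)
    (hx : ∀ t ∈ Set.Ici T, HasDerivWithinAt x (x' t) (Set.Ici T) t)
    (hy : ∀ t ∈ Set.Ici T, HasDerivWithinAt y (y' t) (Set.Ici T) t)
    (hy' : ∀ t ∈ Set.Ici T, 0 < y' t)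
    (hlim : Filter.Tendsto y Filter.atTop Filter.atTop)
    (hdrift : ∀ t ∈ Set.Ici T, K ≤ x t → x' t ≤ -κ * y' t) :
    ∀ᶠ t in Filter.atTop, x t ≤ K := by
  obtain ⟨t₁, ht₁, hxt₁⟩ : ∃ t₁ ∈ Set.Ici T, x t₁ ≤ K := by
    -- Otherwise `x + κ y` is antitone, which drives `x` to `-∞`.
    by_contra! hcon
    have hd : ∀ t ∈ Set.Ici T,
        HasDerivWithinAt (fun s => x s + κ * y s) (x' t + κ * y' t) (Set.Ici T) t :=
      fun t ht => (hx t ht).add ((hy t ht).const_mul κ)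
    have hanti : AntitoneOn (fun s => x s + κ * y s) (Set.Ici T) := by
      refine antitoneOn_of_hasDerivWithinAt_nonpos (f' := fun t => x' t + κ * y' t)
        (convex_Ici T) (fun t ht => (hd t ht).continuousWithinAt) ?_ ?_
      · exact fun t ht => (hd t (interior_subset ht)).mono interior_subset
      · intro t ht
        have ht' := interior_subset ht
        have := hdrift t ht' (hcon t ht').le
        linarith
    obtain ⟨t, hty, htT⟩ := ((hlim.eventually_gt_atTop ((x T + κ * y T - K) / κ)).and
      (Filter.eventually_ge_atTop T)).exists
    have h1 : x t + κ * y t ≤ x T + κ * y T := hanti Set.self_mem_Ici htT htT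
    have h2 := hcon t htT
    rw [div_lt_iff₀ hκ] at hty
    linarith
  filter_upwards [Filter.eventually_ge_atTop t₁] with t ht
  have hsub : ∀ s ∈ Set.Icc t₁ t, s ∈ Set.Ici T := fun s hs => le_trans ht₁ hs.1
  refine image_le_of_deriv_right_lt_deriv_boundary' (f := x) (f' := x') (a := t₁) (b := t)
    (B := fun _ => K) (B' := fun _ => 0)
    (fun s hs => ((hx s (hsub s hs)).mono hsub).continuousWithinAt) ?_ hxt₁
    continuousOn_const (fun s _ => hasDerivWithinAt_const _ _ _) ?_ ⟨ht, le_rfl⟩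
  · intro s hs
    have hs' := hsub s ⟨hs.1, hs.2.le⟩
    exact (hx s hs').mono (Set.Ici_subset_Ici.2 hs')
  · intro s hs hK
    have hs' := hsub s ⟨hs.1, hs.2.le⟩
    have h1 := hdrift s hs' hK.ge
    have h2 := mul_pos hκ (hy' s hs')
    linarith

/-- For large `y` the two terms are nearly `p exp (-y - x)` and `q exp (-y + x)`, whose ratio is
`exp (2 (L - x)) ≤ r ^ 2`; the threshold on `y` makes the error at most a factor `1 / r`. -/
lemma sigmoid_ratio {p q ε L r x y : ℝ} (hq : 0 < q) (hL : p = q * Real.exp (2 * L))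
    (hr : r = Real.exp (-ε)) (hε : 0 < ε) (hx : L + ε ≤ x) (hy : L - Real.log (r - r ^ 2) ≤ y) :
    p / (1 + Real.exp (y + x)) ≤ r * (q / (1 + Real.exp (y - x))) := by
  have hr0 : 0 < r := hr ▸ Real.exp_pos _
  have hr1 : r < 1 := by rw [hr, Real.exp_lt_one_iff]; linarith
  have hrr : 0 < r - r ^ 2 := by nlinarith
  have h1 : Real.exp (2 * L) * Real.exp (y - x) ≤ r ^ 2 * Real.exp (y + x) := by
    rw [hr, ← Real.exp_nat_mul, ← Real.exp_add, ← Real.exp_add, Real.exp_le_exp]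
    push_cast
    linarith
  have h2 : Real.exp (2 * L) ≤ (r - r ^ 2) * Real.exp (y + x) := by
    nth_rewrite 1 [← Real.exp_log hrr]
    rw [← Real.exp_add, Real.exp_le_exp]
    linarith
  rw [← mul_div_assoc, div_le_div_iff₀ (by positivity) (by positivity), hL]
  have h3 : q * (Real.exp (2 * L) + Real.exp (2 * L) * Real.exp (y - x))
      ≤ q * (r + r * Real.exp (y + x)) :=
    mul_le_mul_of_nonneg_left (by linarith) hq.le
  linarith

/-- Whatever the sign of `x`, one of the two exponents is at most `y`, so the total speed is
bounded below in terms of `y` alone. -/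
lemma sigmoid_sum_lower {p q x y M : ℝ} (hp : 0 < p) (hq : 0 < q) (hM : y ≤ M) :
    min p q / (1 + Real.exp M) ≤
      p / (1 + Real.exp (y + x)) + q / (1 + Real.exp (y - x)) := by
  have hA : 0 < p / (1 + Real.exp (y + x)) := by positivity
  have hB : 0 < q / (1 + Real.exp (y - x)) := by positivity
  rcases le_total x 0 with h | h
  · have : min p q / (1 + Real.exp M) ≤ p / (1 + Real.exp (y + x)) :=
      div_le_div₀ hp.le (min_le_left _ _) (by positivity)
        (by have := Real.exp_le_exp.2 (show y + x ≤ M by linarith); linarith)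
    linarith
  · have : min p q / (1 + Real.exp M) ≤ q / (1 + Real.exp (y - x)) :=
      div_le_div₀ hq.le (min_le_right _ _) (by positivity)
        (by have := Real.exp_le_exp.2 (show y - x ≤ M by linarith); linarith)
    linarith

lemma tendsto_atTop_of_flow {b p q : ℝ} (hb : 0 < b) (hp : 0 < p) (hq : 0 < q)
    {x y y' : ℝ → ℝ}
    (hy : ∀ t ∈ Set.Ici (0 : ℝ), HasDerivWithinAt y (y' t) (Set.Ici 0) t)
    (hey : ∀ t ∈ Set.Ici (0 : ℝ), y' t = b *
      (p / (1 + Real.exp (y t + x t)) + q / (1 + Real.exp (y t - x t)))) :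
    Filter.Tendsto y Filter.atTop Filter.atTop := by
  have hcont : ContinuousOn y (Set.Ici 0) := fun t ht => (hy t ht).continuousWithinAt
  have hmono : MonotoneOn y (Set.Ici 0) := by
    refine monotoneOn_of_hasDerivWithinAt_nonneg (f' := y') (convex_Ici 0) hcont
      (fun t ht => (hy t (interior_subset ht)).mono interior_subset) ?_
    intro t ht
    rw [hey t (interior_subset ht)]
    positivity
  refine Filter.tendsto_atTop.2 fun M => ?_
  obtain ⟨t₀, ht₀, hM⟩ : ∃ t₀ ∈ Set.Ici (0 : ℝ), M ≤ y t₀ := by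
    by_contra! hcon
    set m := b * (min p q / (1 + Real.exp M)) with hm
    have hmpos : 0 < m := by
      have := lt_min hp hq
      positivity
    have hgrow : MonotoneOn (fun s => y s - m * s) (Set.Ici 0) := by
      have hd : ∀ t ∈ Set.Ici (0 : ℝ),
          HasDerivWithinAt (fun s => y s - m * s) (y' t - m * 1) (Set.Ici 0) t :=
        fun t ht => (hy t ht).sub ((hasDerivWithinAt_id t _).const_mul m)
      refine monotoneOn_of_hasDerivWithinAt_nonneg (f' := fun t => y' t - m * 1) (convex_Ici 0)
        (fun t ht => (hd t ht).continuousWithinAt)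
        (fun t ht => (hd t (interior_subset ht)).mono interior_subset) ?_
      intro t ht
      have ht' := interior_subset ht
      have := mul_le_mul_of_nonneg_left
        (sigmoid_sum_lower (x := x t) hp hq (hcon t ht').le) hb.le
      rw [hey t ht']
      linarith
    have h0 := hcon 0 Set.self_mem_Ici
    have hs : (0 : ℝ) ≤ (M - y 0) / m := div_nonneg (by linarith) hmpos.le
    have h1 : y 0 - m * 0 ≤ y ((M - y 0) / m) - m * ((M - y 0) / m) :=
      hgrow Set.self_mem_Ici hs hs
    have h2 := hcon _ hs
    rw [mul_div_cancel₀ _ hmpos.ne'] at h1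
    linarith
  filter_upwards [Filter.eventually_ge_atTop t₀] with t ht
  exact hM.trans (hmono ht₀ (le_trans ht₀ ht) ht)

/-- The one-sided bound. Since `p` and `q` are unordered, it applies both to `γ₁` and, with the
weights exchanged, to `-γ₁`. -/
lemma flow_eventually_le {a b p q L ε : ℝ} (ha : 0 < a) (hb : 0 < b) (hp : 0 < p) (hq : 0 < q)
    (hL : p = q * Real.exp (2 * L)) (hε : 0 < ε) {x y x' y' : ℝ → ℝ}
    (hx : ∀ t ∈ Set.Ici (0 : ℝ), HasDerivWithinAt x (x' t) (Set.Ici 0) t)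
    (hy : ∀ t ∈ Set.Ici (0 : ℝ), HasDerivWithinAt y (y' t) (Set.Ici 0) t)
    (hex : ∀ t ∈ Set.Ici (0 : ℝ), x' t = a *
      (p / (1 + Real.exp (y t + x t)) - q / (1 + Real.exp (y t - x t))))
    (hey : ∀ t ∈ Set.Ici (0 : ℝ), y' t = b *
      (p / (1 + Real.exp (y t + x t)) + q / (1 + Real.exp (y t - x t)))) :
    ∀ᶠ t in Filter.atTop, x t ≤ L + ε := by
  have hlim := tendsto_atTop_of_flow hb hp hq hy hey
  obtain ⟨r, hr⟩ : ∃ r, r = Real.exp (-ε) := ⟨_, rfl⟩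
  have hr0 : 0 < r := hr ▸ Real.exp_pos _
  have hr1 : r < 1 := by rw [hr, Real.exp_lt_one_iff]; linarith
  obtain ⟨T₀, hT₀⟩ := Filter.eventually_atTop.1
    (hlim.eventually_ge_atTop (L - Real.log (r - r ^ 2)))
  have hsub : Set.Ici (max T₀ 0) ⊆ Set.Ici (0 : ℝ) := Set.Ici_subset_Ici.2 (le_max_right _ _)
  -- `A ≤ r B` gives `A - B ≤ -((1 - r) / 2) (A + B)`; the factor `a / b` compares `x'` with `y'`.
  refine eventually_le_of_drift (T := max T₀ 0) (κ := (1 - r) / 2 * (a / b))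
    (mul_pos (by linarith) (div_pos ha hb))
    (fun t ht => (hx t (hsub ht)).mono hsub) (fun t ht => (hy t (hsub ht)).mono hsub)
    (fun t ht => by rw [hey t (hsub ht)]; positivity) hlim ?_
  intro t ht hxt
  have hAB := sigmoid_ratio hq hL hr hε hxt (hT₀ t (le_trans (le_max_left _ _) ht))
  rw [hex t (hsub ht), hey t (hsub ht)]
  have hB : 0 < q / (1 + Real.exp (y t - x t)) := by positivity
  generalize p / (1 + Real.exp (y t + x t)) = A at *
  generalize q / (1 + Real.exp (y t - x t)) = B at *
  have hab : -((1 - r) / 2 * (a / b)) * (b * (A + B)) = a * (-((1 - r) / 2) * (A + B)) := by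
    field_simp
  rw [hab]
  refine mul_le_mul_of_nonneg_left ?_ ha.le
  nlinarith [mul_nonneg (show 0 ≤ 3 - r by linarith) (sub_nonneg.2 hAB),
    mul_nonneg (sq_nonneg (1 - r)) hB.le]

/-- Two-particle gradient flow initialized at zero: the orthogonal component `γ₁` converges
to `(1/2) log (p₁/p₂)` as `t → ∞`. -/
theorem stmt_14 (c α p₁ p₂ : ℝ) (hc : 0 < c) (hα : -1 < α) (hα' : α < 1)
    (hp : p₂ ≤ p₁) (hp₂ : 0 < p₂) (hps : p₁ + p₂ = 1)
    (γ₁ γ₂ γ₁' γ₂' : ℝ → ℝ) (h₁0 : γ₁ 0 = 0) (h₂0 : γ₂ 0 = 0)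
    (hd₁ : ∀ t ∈ Set.Ici (0 : ℝ), HasDerivWithinAt γ₁ (γ₁' t) (Set.Ici 0) t)
    (hd₂ : ∀ t ∈ Set.Ici (0 : ℝ), HasDerivWithinAt γ₂ (γ₂' t) (Set.Ici 0) t)
    (he₁ : ∀ t ∈ Set.Ici (0 : ℝ), γ₁' t = c * (1 + α) *
      (p₁ / (1 + Real.exp (γ₂ t + γ₁ t)) - p₂ / (1 + Real.exp (γ₂ t - γ₁ t))))
    (he₂ : ∀ t ∈ Set.Ici (0 : ℝ), γ₂' t = c * (1 - α) *
      (p₁ / (1 + Real.exp (γ₂ t + γ₁ t)) + p₂ / (1 + Real.exp (γ₂ t - γ₁ t)))) :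
    Filter.Tendsto γ₁ Filter.atTop (nhds ((1 / 2) * Real.log (p₁ / p₂))) := by
  have hp₁ : 0 < p₁ := hp₂.trans_le hp
  have ha : 0 < c * (1 + α) := mul_pos hc (by linarith)
  have hb : 0 < c * (1 - α) := mul_pos hc (by linarith)
  set L := (1 / 2) * Real.log (p₁ / p₂) with hLdef
  have hexp : Real.exp (2 * L) = p₁ / p₂ := by
    rw [hLdef, ← mul_assoc, show (2 : ℝ) * (1 / 2) = 1 by norm_num, one_mul,
      Real.exp_log (div_pos hp₁ hp₂)]
  have hL : p₁ = p₂ * Real.exp (2 * L) := by rw [hexp]; field_simp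
  have hL' : p₂ = p₁ * Real.exp (2 * -L) := by
    rw [mul_neg, Real.exp_neg, hexp]; field_simp
  rw [Metric.tendsto_nhds]
  intro ε hε
  have hup := flow_eventually_le ha hb hp₁ hp₂ hL (half_pos hε) hd₁ hd₂ he₁ he₂
  have hlow := flow_eventually_le (x := fun t => -γ₁ t) (x' := fun t => -γ₁' t) ha hb hp₂ hp₁ hL'
    (half_pos hε) (fun t ht => (hd₁ t ht).neg) hd₂
    (fun t ht => by rw [he₁ t ht, ← sub_eq_add_neg, sub_neg_eq_add]; ring)
    (fun t ht => by rw [he₂ t ht, ← sub_eq_add_neg, sub_neg_eq_add]; ring)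
  filter_upwards [hup, hlow] with t h1 h2
  rw [Real.dist_eq, abs_lt]
  constructor <;> linarith
end

section
/- Consider the two-particle gradient-descent system with learning rate η > 0 and γ₁(0) = γ₂(0) = 0. Then for all t ∈ ℕ, γ₂(t) ≥ 0 and exp(γ₂(t)) ≥ η c (1−α) p₂ t / 2 + 1; in particular γ₂(t) ≥ log(η c (1−α) p₂ t / 2 + 1). -/
/-!
Whatever the sign of `γ₁`, one of the two logistic terms has an exponent at most `γ₂`. As
`p₂ ≤ p₁` and `1 ≤ exp γ₂`, that term alone is at least `p₂ / (2 exp γ₂)`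
(`half_le_logistic_sum`). Hence `γ₂` grows by at least `η c (1 - α) p₂ / (2 exp γ₂)` at each step,
and `1 + d ≤ exp d` turns this into an additive growth of `exp γ₂` by `η c (1 - α) p₂ / 2`;
an induction on `t` concludes.
-/

lemma half_le_logistic {p q x y : ℝ} (hq : 0 < q) (hqp : q ≤ p) (hx : 0 ≤ x) (hy : y ≤ x) :
    q / (2 * Real.exp x) ≤ p / (1 + Real.exp y) := by
  have h1 : 1 ≤ Real.exp x := Real.one_le_exp hx
  have h2 : Real.exp y ≤ Real.exp x := Real.exp_le_exp.mpr hy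
  have h3 : 0 < Real.exp y := Real.exp_pos y
  exact div_le_div₀ (by linarith) hqp (by linarith) (by linarith)

lemma half_le_logistic_sum {p q x y : ℝ} (hq : 0 < q) (hqp : q ≤ p) (hx : 0 ≤ x) :
    q / (2 * Real.exp x) ≤ p / (1 + Real.exp (x + y)) + q / (1 + Real.exp (x - y)) := by
  have hp : 0 < p := hq.trans_le hqp
  have h1 : 0 ≤ p / (1 + Real.exp (x + y)) := by positivity
  have h2 : 0 ≤ q / (1 + Real.exp (x - y)) := by positivity
  rcases le_total y 0 with hy | hy
  · have := half_le_logistic (y := x + y) hq hqp hx (by linarith)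
    linarith
  · have := half_le_logistic (y := x - y) hq le_rfl hx (by linarith)
    linarith


/-- Two-particle gradient descent initialized at zero: the max-margin direction satisfies
`γ₂ t ≥ 0`, `exp (γ₂ t) ≥ η c (1-α) p₂ t / 2 + 1`, hence `γ₂ t ≥ log (η c (1-α) p₂ t / 2 + 1)`. -/
theorem stmt_15 (c α p₁ p₂ η : ℝ) (hc : 0 < c) (hα : -1 < α) (hα' : α < 1)
    (hp : p₂ ≤ p₁) (hp₂ : 0 < p₂) (hps : p₁ + p₂ = 1) (hη : 0 < η)
    (γ₁ γ₂ : ℕ → ℝ) (h₁0 : γ₁ 0 = 0) (h₂0 : γ₂ 0 = 0)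
    (hu₁ : ∀ t : ℕ, γ₁ (t + 1) = γ₁ t + η * c * (1 + α) *
      (p₁ / (1 + Real.exp (γ₂ t + γ₁ t)) - p₂ / (1 + Real.exp (γ₂ t - γ₁ t))))
    (hu₂ : ∀ t : ℕ, γ₂ (t + 1) = γ₂ t + η * c * (1 - α) *
      (p₁ / (1 + Real.exp (γ₂ t + γ₁ t)) + p₂ / (1 + Real.exp (γ₂ t - γ₁ t)))) :
    ∀ t : ℕ, 0 ≤ γ₂ t ∧ η * c * (1 - α) * p₂ * t / 2 + 1 ≤ Real.exp (γ₂ t) ∧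
      Real.log (η * c * (1 - α) * p₂ * t / 2 + 1) ≤ γ₂ t := by
  have hk : 0 < η * c * (1 - α) := mul_pos (mul_pos hη hc) (by linarith)
  have key : ∀ t : ℕ, 0 ≤ γ₂ t ∧ η * c * (1 - α) * p₂ * t / 2 + 1 ≤ Real.exp (γ₂ t) := by
    intro t
    induction t with
    | zero => simp [h₂0]
    | succ t ih =>
      obtain ⟨h0, h1⟩ := ih
      have hs := half_le_logistic_sum (y := γ₁ t) hp₂ hp h0
      have hu := hu₂ t
      set S := p₁ / (1 + Real.exp (γ₂ t + γ₁ t)) + p₂ / (1 + Real.exp (γ₂ t - γ₁ t))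
      set k := η * c * (1 - α)
      have hE : 0 < Real.exp (γ₂ t) := Real.exp_pos _
      have hS : p₂ / 2 ≤ Real.exp (γ₂ t) * S := by
        calc p₂ / 2 = Real.exp (γ₂ t) * (p₂ / (2 * Real.exp (γ₂ t))) := by field_simp
          _ ≤ Real.exp (γ₂ t) * S := by gcongr
      have hS0 : 0 ≤ S := le_trans (by positivity) hs
      refine ⟨by rw [hu]; positivity, ?_⟩
      calc k * p₂ * ((t + 1 : ℕ) : ℝ) / 2 + 1 = (k * p₂ * t / 2 + 1) + k * (p₂ / 2) := by
            push_cast; ring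
        _ ≤ Real.exp (γ₂ t) + k * (Real.exp (γ₂ t) * S) := by gcongr
        _ = Real.exp (γ₂ t) * (k * S + 1) := by ring
        _ ≤ Real.exp (γ₂ t) * Real.exp (k * S) := by
            gcongr
            exact Real.add_one_le_exp _
        _ = Real.exp (γ₂ (t + 1)) := by rw [hu, Real.exp_add]
  intro t
  obtain ⟨h0, h1⟩ := key t
  exact ⟨h0, h1, (Real.log_le_iff_le_exp (by positivity)).mpr h1⟩
end

section
/- Consider the two-token margin gradient-descent system with learning rate η > 0, c > 0, α ∈ (0, 1] satisfying α p₁ > p₂, initialized at m₁(0) = m₂(0) = 0. Then after one step, m₂(1) = η c (p₂ − α p₁)/2 < 0, and consequently the cross-entropy loss after one step satisfies p₁·log(1 + exp(−m₁(1))) + p₂·log(1 + exp(−m₂(1))) ≥ η c (α p₁ − p₂) p₂ / 2, which is unbounded as η → ∞ (a loss spike). -/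
/-!
Both sigmoid factors equal `1 / 2` at zero margins, so `m₂ 1` is explicit and is negative because
`p₂ < α * p₁`. The loss bound follows by dropping the nonnegative term of the first token and
using `x ≤ log (1 + exp x)` at `x = -(m₂ 1)` for the second.
-/

/-- Loss spike: in the two-token margin gradient-descent system with `α p₁ > p₂`, starting
from zero margins, one step gives `m₂ 1 = η c (p₂ - α p₁) / 2 < 0` and the cross-entropy
loss after one step is at least `η c (α p₁ - p₂) p₂ / 2`, which is unbounded as `η → ∞`. -/
theorem stmt_17 (p₁ p₂ α c η : ℝ) (hp : p₂ ≤ p₁) (hp₂ : 0 < p₂) (hps : p₁ + p₂ = 1)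
    (hα0 : 0 < α) (hα1 : α ≤ 1) (hc : 0 < c) (hη : 0 < η) (hcomp : p₂ < α * p₁)
    (m₁ m₂ : ℕ → ℝ) (h₁0 : m₁ 0 = 0) (h₂0 : m₂ 0 = 0)
    (hu₁ : ∀ t : ℕ, m₁ (t + 1) = m₁ t +
      η * c * (p₁ / (1 + Real.exp (m₁ t)) - α * p₂ / (1 + Real.exp (m₂ t))))
    (hu₂ : ∀ t : ℕ, m₂ (t + 1) = m₂ t +
      η * c * (p₂ / (1 + Real.exp (m₂ t)) - α * p₁ / (1 + Real.exp (m₁ t)))) :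
    m₂ 1 = η * c * (p₂ - α * p₁) / 2 ∧ m₂ 1 < 0 ∧
      η * c * (α * p₁ - p₂) * p₂ / 2 ≤
        p₁ * Real.log (1 + Real.exp (-(m₁ 1))) + p₂ * Real.log (1 + Real.exp (-(m₂ 1))) := by
  have h₂ : m₂ 1 = η * c * (p₂ - α * p₁) / 2 := by
    have h := hu₂ 0
    rw [h₁0, h₂0, Real.exp_zero] at h
    rw [zero_add] at h
    rw [h]
    ring
  have hneg : m₂ 1 < 0 := by
    rw [h₂]
    have := mul_pos (mul_pos hη hc) (sub_pos.mpr hcomp)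
    linarith
  refine ⟨h₂, hneg, ?_⟩
  have hlog₁ : 0 ≤ Real.log (1 + Real.exp (-(m₁ 1))) :=
    Real.log_nonneg (by linarith [Real.exp_pos (-(m₁ 1))])
  have hlog₂ : -(m₂ 1) ≤ Real.log (1 + Real.exp (-(m₂ 1))) := by
    rw [Real.le_log_iff_exp_le (by positivity)]
    linarith
  have hloss₁ := mul_nonneg (hp₂.le.trans hp) hlog₁
  have hloss₂ := mul_le_mul_of_nonneg_left hlog₂ hp₂.le
  calc η * c * (α * p₁ - p₂) * p₂ / 2 = p₂ * -(m₂ 1) := by rw [h₂]; ring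
    _ ≤ _ := by linarith
end

section
/- Assume the input embeddings (e_x)_{x∈[N]} are orthonormal in ℝ^d and the output embeddings (u_y)_{y∈[M]} are orthonormal in ℝ^d, and let f* : [N] → [M], p : [N] → (0, ∞). Starting from W₀ = 0, one full-batch gradient-descent step with any learning rate η > 0, W₁ = −η Σ_{x∈[N]} p(x) ∇ℓ(W₀; x, f*(x)), yields for every x ∈ [N] and every j ∈ [M] with j ≠ f*(x) the margin ⟨u_{f*(x)} − u_j, W₁ e_x⟩ = η p(x) > 0; in particular argmax_{y∈[M]} ⟨u_y, W₁ e_x⟩ = f*(x) for every x, i.e., a single gradient step stores all associations. -/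
/-!
At `W = 0` every logit vanishes, so the softmax is uniform, with value `1 / M`. Orthonormality
of the inputs means that `W₁ e_x` only sees the gradient term of the sample `x`, which gives
`W₁ e_x = η p(x) (u_{f*(x)} - (1 / M) ∑ z, u_z)`. Orthonormality of the outputs then evaluates
the logits as `⟨u_y, W₁ e_x⟩ = η p(x) (δ_{y, f*(x)} - 1 / M)`; the common term `1 / M` cancels
in every margin.
-/

/-- Softmax probabilities `p_W(z|x)` of the associative memory model, with matrices
identified with `Fin d → Fin d → ℝ` and `⟨a, W b⟩ = ∑ i, a i * ∑ j, W i j * b j`. -/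
noncomputable def softmaxProb {d N M : ℕ} (e : Fin N → Fin d → ℝ) (u : Fin M → Fin d → ℝ)
    (x : Fin N) (W : Fin d → Fin d → ℝ) (z : Fin M) : ℝ :=
  Real.exp (∑ a, u z a * ∑ b, W a b * e x b) /
    ∑ k, Real.exp (∑ a, u k a * ∑ b, W a b * e x b)

/-- One full-batch gradient-descent step from `W₀` with learning rate `η`:
`W₁ = W₀ - η ∑ x, p x • ∇ℓ(W₀; x, f*(x))`, using the gradient formula
`∇ℓ(W; x, y) = ∑ z, p_W(z|x) (u_z - u_y) e_xᵀ`. -/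
noncomputable def oneStep {d N M : ℕ} (e : Fin N → Fin d → ℝ) (u : Fin M → Fin d → ℝ)
    (fstar : Fin N → Fin M) (p : Fin N → ℝ) (η : ℝ) (W₀ : Fin d → Fin d → ℝ) :
    Fin d → Fin d → ℝ :=
  fun a b => W₀ a b -
    η * ∑ x, p x * ∑ z, softmaxProb e u x W₀ z * ((u z a - u (fstar x) a) * e x b)

theorem softmaxProb_zero {d N M : ℕ} (e : Fin N → Fin d → ℝ) (u : Fin M → Fin d → ℝ)
    (x : Fin N) (z : Fin M) : softmaxProb e u x 0 z = 1 / (M : ℝ) := by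
  simp [softmaxProb]

/-- Uniform softmax weights turn the gradient of a sample into the deviation of `u_{f*(x)}` from
the mean output embedding, and orthonormality of the inputs isolates the sample `x`. -/
theorem oneStep_zero_apply {d N M : ℕ} (hM : 2 ≤ M)
    (e : Fin N → Fin d → ℝ) (u : Fin M → Fin d → ℝ)
    (he₁ : ∀ x, ∑ a, e x a * e x a = 1)
    (he₂ : ∀ x x', x ≠ x' → ∑ a, e x a * e x' a = 0)
    (fstar : Fin N → Fin M) (p : Fin N → ℝ) (η : ℝ) (x : Fin N) (a : Fin d) :
    ∑ b, oneStep e u fstar p η 0 a b * e x b =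
      η * p x * (u (fstar x) a - 1 / (M : ℝ) * ∑ z, u z a) := by
  have hM0 : (M : ℝ) ≠ 0 := by
    have : M ≠ 0 := by omega
    exact_mod_cast this
  have hentry : ∀ b, oneStep e u fstar p η 0 a b =
      ∑ x', η * p x' * (u (fstar x') a - 1 / (M : ℝ) * ∑ z, u z a) * e x' b := by
    intro b
    simp only [oneStep, softmaxProb_zero, Pi.zero_apply, zero_sub, ← Finset.mul_sum,
      ← Finset.sum_mul, Finset.sum_sub_distrib, Finset.sum_const, Finset.card_univ,
      Fintype.card_fin, nsmul_eq_mul]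
    rw [Finset.mul_sum, ← Finset.sum_neg_distrib]
    refine Finset.sum_congr rfl fun x' _ => ?_
    field_simp
    ring
  simp only [hentry, Finset.sum_mul]
  rw [Finset.sum_comm]
  simp only [mul_assoc _ (e _ _) (e _ _), ← Finset.mul_sum]
  rw [Finset.sum_eq_single x]
  · rw [he₁, mul_one]
  · intro x' _ hx'
    rw [he₂ x' x hx', mul_zero]
  · simp

theorem logit_oneStep_zero {d N M : ℕ} (hM : 2 ≤ M)
    (e : Fin N → Fin d → ℝ) (u : Fin M → Fin d → ℝ)
    (he₁ : ∀ x, ∑ a, e x a * e x a = 1)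
    (he₂ : ∀ x x', x ≠ x' → ∑ a, e x a * e x' a = 0)
    (hu₁ : ∀ y, ∑ a, u y a * u y a = 1)
    (hu₂ : ∀ y y', y ≠ y' → ∑ a, u y a * u y' a = 0)
    (fstar : Fin N → Fin M) (p : Fin N → ℝ) (η : ℝ) (x : Fin N) (y : Fin M) :
    ∑ a, u y a * ∑ b, oneStep e u fstar p η 0 a b * e x b =
      η * p x * ((if y = fstar x then 1 else 0) - 1 / (M : ℝ)) := by
  have hu : ∀ y z, ∑ a, u y a * u z a = if y = z then (1 : ℝ) else 0 := by
    intro y z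
    split_ifs with h
    · rw [h, hu₁]
    · exact hu₂ y z h
  have hmean : ∑ a, u y a * ∑ z, u z a = 1 := by
    simp only [Finset.mul_sum]
    rw [Finset.sum_comm]
    simp [hu]
  calc ∑ a, u y a * ∑ b, oneStep e u fstar p η 0 a b * e x b
      = ∑ a, (η * p x * (u y a * u (fstar x) a) -
          η * p x * (1 / (M : ℝ)) * (u y a * ∑ z, u z a)) := by
        refine Finset.sum_congr rfl fun a _ => ?_
        rw [oneStep_zero_apply hM e u he₁ he₂]
        ring
    _ = _ := by
        rw [Finset.sum_sub_distrib, ← Finset.mul_sum, ← Finset.mul_sum, hmean, hu]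
        ring

/-- With orthonormal input and output embeddings, one full-batch gradient-descent step from
`W₀ = 0` with any learning rate `η > 0` gives margin
`⟨u_{f*(x)} - u_j, W₁ e_x⟩ = η p x > 0` for every `x` and every `j ≠ f*(x)`; in particular
`f*(x)` is the strict argmax of `y ↦ ⟨u_y, W₁ e_x⟩`, i.e. one step stores all associations. -/
theorem stmt_19 {d N M : ℕ} (hM : 2 ≤ M)
    (e : Fin N → Fin d → ℝ) (u : Fin M → Fin d → ℝ)
    (he₁ : ∀ x, ∑ a, e x a * e x a = 1)
    (he₂ : ∀ x x', x ≠ x' → ∑ a, e x a * e x' a = 0)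
    (hu₁ : ∀ y, ∑ a, u y a * u y a = 1)
    (hu₂ : ∀ y y', y ≠ y' → ∑ a, u y a * u y' a = 0)
    (fstar : Fin N → Fin M) (p : Fin N → ℝ) (hp : ∀ x, 0 < p x)
    (η : ℝ) (hη : 0 < η) :
    ∀ x : Fin N,
      (∀ j : Fin M, j ≠ fstar x →
        (∑ a, (u (fstar x) a - u j a) * ∑ b, oneStep e u fstar p η 0 a b * e x b) =
          η * p x ∧ 0 < η * p x) ∧
      (∀ y : Fin M, y ≠ fstar x →
        (∑ a, u y a * ∑ b, oneStep e u fstar p η 0 a b * e x b) <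
          ∑ a, u (fstar x) a * ∑ b, oneStep e u fstar p η 0 a b * e x b) := by
  intro x
  have hpos : 0 < η * p x := mul_pos hη (hp x)
  have hlogit := logit_oneStep_zero hM e u he₁ he₂ hu₁ hu₂ fstar p η x
  refine ⟨fun j hj => ⟨?_, hpos⟩, fun y hy => ?_⟩
  · simp only [sub_mul, Finset.sum_sub_distrib]
    rw [hlogit, hlogit, if_pos rfl, if_neg hj]
    ring
  · rw [hlogit, hlogit, if_pos rfl, if_neg hy]
    gcongr
    exact zero_lt_one
end
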